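/- (Propagation of the divergence constraints.) Let E, H : ℝ × ℝ³ → Matrix (Fin 3) (Fin 3) ℝ be smooth, pointwise symmetric matrix-valued fields satisfying ∂ₜE_{ab} = (curl H)_{ab} and ∂ₜH_{ab} = −(curl E)_{ab}, with the tensor curl taken in the spatial variables. Then the spatial divergences satisfy the coupled first-order system ∂ₜ( Σ_b ∂_b E_{ab} ) = ½ Σ_{c,d} ε_{acd} ∂_c ( Σ_b ∂_b H_{db} ) and ∂ₜ( Σ_b ∂_b H_{ab} ) = −½ Σ_{c,d} ε_{acd} ∂_c ( Σ_b ∂_b E_{db} ) for every index a. In particular, the evolution equations propagate the constraint equations: the divergence constraints are preserved in form under time evolution. -/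

import Mathlib

/-- Time partial derivative of a scalar field on `ℝ × ℝ³`. -/
noncomputable def pt (f : ℝ × (Fin 3 → ℝ) → ℝ) (p : ℝ × (Fin 3 → ℝ)) : ℝ :=
  deriv (fun s => f (s, p.2)) p.1

/-- Spatial partial derivative `∂_i` of a scalar field on `ℝ × ℝ³`. -/
noncomputable def ps (i : Fin 3) (f : ℝ × (Fin 3 → ℝ) → ℝ) (p : ℝ × (Fin 3 → ℝ)) : ℝ :=
  deriv (fun s => f (p.1, Function.update p.2 i s)) (p.2 i)

/-- Levi-Civita symbol on three indices. -/
noncomputable def eps (a b c : Fin 3) : ℝ :=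
  (((b : ℕ) : ℝ) - ((a : ℕ) : ℝ)) * (((c : ℕ) : ℝ) - ((b : ℕ) : ℝ))
    * (((c : ℕ) : ℝ) - ((a : ℕ) : ℝ)) / 2

/-- Symmetrized spatial tensor curl of a matrix-valued field on `ℝ × ℝ³`:
`(curl S)_{ab} = ½ Σ_{c,d} ( ε_{acd} ∂_c S_{db} + ε_{bcd} ∂_c S_{da} )`. -/
noncomputable def curlT (S : ℝ × (Fin 3 → ℝ) → Matrix (Fin 3) (Fin 3) ℝ)
    (p : ℝ × (Fin 3 → ℝ)) : Matrix (Fin 3) (Fin 3) ℝ :=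
  Matrix.of fun a b =>
    (1 / 2) * ∑ c, ∑ d,
      (eps a c d * ps c (fun q => S q d b) p + eps b c d * ps c (fun q => S q d a) p)

/-! For `C²` fields spatial and time derivatives commute, so `∂ₜ(div E) = div(∂ₜE) = div(curl H)`.
The tensor curl of `H` is the symmetrization of the matrix whose columns are the vector curls of the
columns of `H`. On taking the divergence, one half of this symmetrization is `curl(div H)`, and the
other is the divergence of a vector curl, which vanishes because `ε` is antisymmetric while second
partial derivatives are symmetric. -/

/-- Spatial divergence of a time-dependent vector field on `ℝ³`. -/
noncomputable def divV (v : ℝ × (Fin 3 → ℝ) → Fin 3 → ℝ) (p : ℝ × (Fin 3 → ℝ)) : ℝ :=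
  ∑ b, ps b (fun q => v q b) p

/-- Spatial curl of a time-dependent vector field on `ℝ³`. -/
noncomputable def curlV (v : ℝ × (Fin 3 → ℝ) → Fin 3 → ℝ) (p : ℝ × (Fin 3 → ℝ)) : Fin 3 → ℝ :=
  fun a => ∑ c, ∑ d, eps a c d * ps c (fun q => v q d) p

/-- Spatial divergence of a time-dependent matrix field on `ℝ³`, contracting the derivative with the
second index: `(div S)_a = Σ_b ∂_b S_{ab}`. -/
noncomputable def divT (S : ℝ × (Fin 3 → ℝ) → Matrix (Fin 3) (Fin 3) ℝ)
    (p : ℝ × (Fin 3 → ℝ)) : Fin 3 → ℝ :=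
  fun a => divV (fun q b => S q a b) p

theorem sum_sum_mul_eq_zero_of_antisymm_of_symm {ι R : Type*} [Fintype ι]
    [NonUnitalNonAssocRing R] [IsAddTorsionFree R] {A B : ι → ι → R}
    (hA : ∀ i j, A j i = -A i j) (hB : ∀ i j, B j i = B i j) :
    ∑ i, ∑ j, A i j * B i j = 0 := by
  refine self_eq_neg.mp ?_
  calc ∑ i, ∑ j, A i j * B i j = ∑ i, ∑ j, A j i * B j i := Finset.sum_comm
    _ = ∑ i, ∑ j, -(A i j * B i j) :=
        Finset.sum_congr rfl fun i _ => Finset.sum_congr rfl fun j _ => by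
          rw [hA i j, hB i j, neg_mul]
    _ = -∑ i, ∑ j, A i j * B i j := by simp only [Finset.sum_neg_distrib]

theorem eps_swap_left (a b c : Fin 3) : eps b a c = -eps a b c := by
  unfold eps
  ring

theorem differentiable_fderiv_apply {𝕜 V W : Type*} [NontriviallyNormedField 𝕜]
    [NormedAddCommGroup V] [NormedSpace 𝕜 V] [NormedAddCommGroup W] [NormedSpace 𝕜 W] {g : V → W}
    (hg : ContDiff 𝕜 2 g) (v : V) : Differentiable 𝕜 fun x => fderiv 𝕜 g x v :=
  ((hg.fderiv_right one_add_one_eq_two.le).differentiable one_ne_zero).clm_apply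
    (differentiable_const v)

theorem fderiv_fderiv_apply_comm {𝕜 V W : Type*} [RCLike 𝕜] [NormedAddCommGroup V]
    [NormedSpace 𝕜 V] [NormedAddCommGroup W] [NormedSpace 𝕜 W] {f : V → W} {x : V}
    (hf : ContDiffAt 𝕜 2 f x) (v w : V) :
    fderiv 𝕜 (fun y => fderiv 𝕜 f y v) x w = fderiv 𝕜 (fun y => fderiv 𝕜 f y w) x v := by
  have hdf : DifferentiableAt 𝕜 (fderiv 𝕜 f) x :=
    (hf.fderiv_right (m := 1) one_add_one_eq_two.le).differentiableAt one_ne_zero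
  have hsymm : IsSymmSndFDerivAt 𝕜 f x := hf.isSymmSndFDerivAt (by simp)
  simpa [fderiv_clm_apply hdf (differentiableAt_const _)] using hsymm.eq w v

section PartialDerivatives

variable {f : ℝ × (Fin 3 → ℝ) → ℝ} {p : ℝ × (Fin 3 → ℝ)}

theorem pt_apply_eq_fderiv (hf : DifferentiableAt ℝ f p) : pt f p = fderiv ℝ f p (1, 0) :=
  (hf.hasFDerivAt.comp_hasDerivAt p.1
    ((hasDerivAt_id p.1).prodMk (hasDerivAt_const p.1 p.2))).deriv

theorem ps_apply_eq_fderiv (i : Fin 3) (hf : DifferentiableAt ℝ f p) :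
    ps i f p = fderiv ℝ f p (0, Pi.single i 1) := by
  have hline : HasDerivAt (fun s => (p.1, Function.update p.2 i s)) (0, Pi.single i 1) (p.2 i) :=
    (hasDerivAt_const _ _).prodMk (hasDerivAt_update _ _ _)
  exact (hf.hasFDerivAt.comp_hasDerivAt_of_eq (p.2 i) hline (by simp)).deriv

theorem pt_eq_fderiv (hf : Differentiable ℝ f) : pt f = fun q => fderiv ℝ f q (1, 0) :=
  funext fun q => pt_apply_eq_fderiv (hf q)

theorem ps_eq_fderiv (i : Fin 3) (hf : Differentiable ℝ f) :
    ps i f = fun q => fderiv ℝ f q (0, Pi.single i 1) :=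
  funext fun q => ps_apply_eq_fderiv i (hf q)

theorem differentiable_pt (hf : ContDiff ℝ 2 f) : Differentiable ℝ (pt f) := by
  rw [pt_eq_fderiv (hf.differentiable two_ne_zero)]
  exact differentiable_fderiv_apply hf _

theorem differentiable_ps (i : Fin 3) (hf : ContDiff ℝ 2 f) : Differentiable ℝ (ps i f) := by
  rw [ps_eq_fderiv i (hf.differentiable two_ne_zero)]
  exact differentiable_fderiv_apply hf _

theorem ps_comm (i j : Fin 3) (hf : ContDiff ℝ 2 f) : ps i (ps j f) p = ps j (ps i f) p := by
  have hdiff : Differentiable ℝ f := hf.differentiable two_ne_zero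
  rw [ps_eq_fderiv i (differentiable_ps j hf), ps_eq_fderiv j (differentiable_ps i hf),
    ps_eq_fderiv i hdiff, ps_eq_fderiv j hdiff]
  exact fderiv_fderiv_apply_comm hf.contDiffAt _ _

theorem pt_ps_comm (i : Fin 3) (hf : ContDiff ℝ 2 f) : pt (ps i f) p = ps i (pt f) p := by
  have hdiff : Differentiable ℝ f := hf.differentiable two_ne_zero
  rw [pt_eq_fderiv (differentiable_ps i hf), ps_eq_fderiv i (differentiable_pt hf),
    ps_eq_fderiv i hdiff, pt_eq_fderiv hdiff]
  exact fderiv_fderiv_apply_comm hf.contDiffAt _ _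

theorem ps_const_mul (i : Fin 3) (k : ℝ) : ps i (fun q => k * f q) p = k * ps i f p :=
  deriv_const_mul_field k

theorem ps_add {g : ℝ × (Fin 3 → ℝ) → ℝ} (i : Fin 3) (hf : DifferentiableAt ℝ f p)
    (hg : DifferentiableAt ℝ g p) : ps i (fun q => f q + g q) p = ps i f p + ps i g p := by
  rw [ps_apply_eq_fderiv i (hf.fun_add hg), ps_apply_eq_fderiv i hf, ps_apply_eq_fderiv i hg,
    fderiv_fun_add hf hg, add_apply]

variable {ι : Type*} {u : Finset ι} {F : ι → ℝ × (Fin 3 → ℝ) → ℝ}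

theorem pt_sum (hF : ∀ j ∈ u, DifferentiableAt ℝ (F j) p) :
    pt (fun q => ∑ j ∈ u, F j q) p = ∑ j ∈ u, pt (F j) p := by
  rw [pt_apply_eq_fderiv (.fun_sum hF), fderiv_fun_sum hF, sum_apply]
  exact Finset.sum_congr rfl fun j hj => (pt_apply_eq_fderiv (hF j hj)).symm

theorem ps_sum (i : Fin 3) (hF : ∀ j ∈ u, DifferentiableAt ℝ (F j) p) :
    ps i (fun q => ∑ j ∈ u, F j q) p = ∑ j ∈ u, ps i (F j) p := by
  rw [ps_apply_eq_fderiv i (.fun_sum hF), fderiv_fun_sum hF, sum_apply]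
  exact Finset.sum_congr rfl fun j hj => (ps_apply_eq_fderiv i (hF j hj)).symm

end PartialDerivatives

section VectorFields

variable {v : ℝ × (Fin 3 → ℝ) → Fin 3 → ℝ} {p : ℝ × (Fin 3 → ℝ)}

theorem differentiable_curlV (hv : ∀ d, ContDiff ℝ 2 fun q => v q d) (a : Fin 3) :
    Differentiable ℝ fun q => curlV v q a :=
  .fun_sum fun c _ => .fun_sum fun d _ => (differentiable_ps c (hv d)).const_mul _

theorem curlV_sum {ι : Type*} {u : Finset ι} {w : ι → ℝ × (Fin 3 → ℝ) → Fin 3 → ℝ}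
    (hw : ∀ j ∈ u, ∀ d, DifferentiableAt ℝ (fun q => w j q d) p) (a : Fin 3) :
    curlV (fun q d => ∑ j ∈ u, w j q d) p a = ∑ j ∈ u, curlV (w j) p a := by
  have hps (c d : Fin 3) :
      ps c (fun q => ∑ j ∈ u, w j q d) p = ∑ j ∈ u, ps c (fun q => w j q d) p :=
    ps_sum c fun j hj => hw j hj d
  simp only [curlV, hps, Finset.mul_sum, Finset.sum_comm (t := u)]

theorem ps_curlV (hv : ∀ d, ContDiff ℝ 2 fun q => v q d) (i a : Fin 3) :
    ps i (fun q => curlV v q a) p = curlV (fun q d => ps i (fun q' => v q' d) q) p a := by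
  have hterm (c d : Fin 3) :
      Differentiable ℝ fun q => eps a c d * ps c (fun q' => v q' d) q :=
    (differentiable_ps c (hv d)).const_mul _
  unfold curlV
  rw [ps_sum i fun c _ => .fun_sum fun d _ => hterm c d p]
  refine Finset.sum_congr rfl fun c _ => ?_
  rw [ps_sum i fun d _ => hterm c d p]
  refine Finset.sum_congr rfl fun d _ => ?_
  rw [ps_const_mul]
  exact congrArg (eps a c d * ·) (ps_comm i c (hv d))

theorem divV_curlV (hv : ∀ d, ContDiff ℝ 2 fun q => v q d) : divV (curlV v) p = 0 := by
  calc divV (curlV v) p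
      = ∑ b, ∑ c, ∑ d, eps b c d * ps c (ps b fun q => v q d) p :=
        Finset.sum_congr rfl fun b _ => ps_curlV hv b b
    _ = ∑ d, ∑ b, ∑ c, eps b c d * ps c (ps b fun q => v q d) p :=
        (Finset.sum_congr rfl fun b _ => Finset.sum_comm).trans Finset.sum_comm
    _ = 0 := Finset.sum_eq_zero fun d _ => sum_sum_mul_eq_zero_of_antisymm_of_symm
        (fun b c => eps_swap_left b c d) fun b c => ps_comm b c (hv d)

end VectorFields

section MatrixFields

variable {S T : ℝ × (Fin 3 → ℝ) → Matrix (Fin 3) (Fin 3) ℝ} {p : ℝ × (Fin 3 → ℝ)}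

theorem curlT_apply (T : ℝ × (Fin 3 → ℝ) → Matrix (Fin 3) (Fin 3) ℝ) (p : ℝ × (Fin 3 → ℝ))
    (a b : Fin 3) :
    curlT T p a b =
      (1 / 2) * (curlV (fun q d => T q d b) p a + curlV (fun q d => T q d a) p b) := by
  simp only [curlT, curlV, Matrix.of_apply, Finset.sum_add_distrib]

theorem sum_ps_curlV_col (hT : ∀ a b, ContDiff ℝ 2 fun q => T q a b) (a : Fin 3) :
    ∑ b, ps b (fun q => curlV (fun q' d => T q' d b) q a) p = curlV (divT T) p a := by
  simp only [ps_curlV (hT · _)]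
  exact (curlV_sum (fun b _ d => differentiable_ps b (hT d b) p) a).symm

theorem divT_curlT (hT : ∀ a b, ContDiff ℝ 2 fun q => T q a b) (a : Fin 3) :
    divT (curlT T) p a = (1 / 2) * curlV (divT T) p a := by
  have hcol (a b : Fin 3) : DifferentiableAt ℝ (fun q => curlV (fun q' d => T q' d b) q a) p :=
    differentiable_curlV (hT · b) a p
  calc divT (curlT T) p a
      = (1 / 2) * (∑ b, ps b (fun q => curlV (fun q' d => T q' d b) q a) p +
          divV (curlV fun q d => T q d a) p) := by
        simp only [divT, divV, curlT_apply, ps_const_mul, ps_add _ (hcol _ _) (hcol _ _),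
          ← Finset.mul_sum, Finset.sum_add_distrib]
    _ = (1 / 2) * curlV (divT T) p a := by
        rw [sum_ps_curlV_col hT, divV_curlV (hT · a), add_zero]

theorem pt_divT (hS : ∀ a b, ContDiff ℝ 2 fun q => S q a b) (a : Fin 3) :
    pt (fun q => divT S q a) p = divT (fun q => .of fun i j => pt (fun q' => S q' i j) q) p a :=
  calc pt (fun q => divT S q a) p
      = ∑ b, pt (ps b fun q => S q a b) p :=
        pt_sum (u := Finset.univ) fun b _ => differentiable_ps b (hS a b) p
    _ = ∑ b, ps b (pt fun q => S q a b) p := Finset.sum_congr rfl fun b _ => pt_ps_comm b (hS a b)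

theorem pt_divT_of_pt_eq_curlT {k : ℝ} (hS : ∀ a b, ContDiff ℝ 2 fun q => S q a b)
    (hT : ∀ a b, ContDiff ℝ 2 fun q => T q a b)
    (hdot : ∀ q a b, pt (fun q' => S q' a b) q = k * curlT T q a b) (a : Fin 3) :
    pt (fun q => divT S q a) p = k * ((1 / 2) * curlV (divT T) p a) := by
  rw [pt_divT hS, ← divT_curlT hT]
  simp only [divT, divV, hdot, Matrix.of_apply, ps_const_mul, Finset.mul_sum]

end MatrixFields

theorem divergence_constraints_propagate_general
    (E H : ℝ × (Fin 3 → ℝ) → Matrix (Fin 3) (Fin 3) ℝ)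
    (hE : ∀ a b, ContDiff ℝ 2 fun p => E p a b) (hH : ∀ a b, ContDiff ℝ 2 fun p => H p a b)
    (hdotE : ∀ p a b, pt (fun q => E q a b) p = curlT H p a b)
    (hdotH : ∀ p a b, pt (fun q => H q a b) p = -curlT E p a b) (a : Fin 3)
    (p : ℝ × (Fin 3 → ℝ)) :
    pt (fun q => divT E q a) p = (1 / 2) * curlV (divT H) p a ∧
      pt (fun q => divT H q a) p = -((1 / 2) * curlV (divT E) p a) := by
  constructor
  · simpa only [one_mul] using pt_divT_of_pt_eq_curlT (k := 1) hE hH (by simpa using hdotE) a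
  · simpa only [neg_one_mul] using pt_divT_of_pt_eq_curlT (k := -1) hH hE (by simpa using hdotH) a

/-- Propagation of the divergence constraints: for smooth symmetric `E, H` with
`∂ₜE = curl H` and `∂ₜH = −curl E`, the spatial divergences obey the coupled
first-order system
`∂ₜ(div E)_a = ½ Σ_{c,d} ε_{acd} ∂_c (div H)_d` and
`∂ₜ(div H)_a = −½ Σ_{c,d} ε_{acd} ∂_c (div E)_d`. -/
theorem divergence_constraints_propagate
    (E H : ℝ × (Fin 3 → ℝ) → Matrix (Fin 3) (Fin 3) ℝ)
    (hEsmooth : ∀ a b, ContDiff ℝ (⊤ : ℕ∞) (fun p => E p a b))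
    (hHsmooth : ∀ a b, ContDiff ℝ (⊤ : ℕ∞) (fun p => H p a b))
    (hEsymm : ∀ p a b, E p a b = E p b a)
    (hHsymm : ∀ p a b, H p a b = H p b a)
    (hdotE : ∀ p a b, pt (fun q => E q a b) p = curlT H p a b)
    (hdotH : ∀ p a b, pt (fun q => H q a b) p = - curlT E p a b) :
    ∀ a p,
      pt (fun q => ∑ b, ps b (fun q' => E q' a b) q) p =
        (1 / 2) * ∑ c, ∑ d,
          eps a c d * ps c (fun q => ∑ b, ps b (fun q' => H q' d b) q) p ∧
      pt (fun q => ∑ b, ps b (fun q' => H q' a b) q) p =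
        -((1 / 2) * ∑ c, ∑ d,
          eps a c d * ps c (fun q => ∑ b, ps b (fun q' => E q' d b) q) p) := by
  exact divergence_constraints_propagate_general E H
    (fun a b => contDiff_infty.mp (hEsmooth a b) 2) (fun a b => contDiff_infty.mp (hHsmooth a b) 2)
    hdotE hdotH
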